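/- arXiv:1205.1789 — 2 statements merged into one kernel-verified Lean document; each statement's English description precedes it below -/
import Mathlib

section
/- Let b ≥ 2 be an integer and define g : {−1,1}^{b−1} → ℤ by g(σ) = σ₁ + Σ_{i=1}^{b−2} σᵢσᵢ₊₁ − σ_{b−1}. Then the maximum of g equals b − 2, and the set of maximizers of g has exactly b elements: for each i ∈ {1, …, b} there is exactly one maximizer, namely the configuration with σ_j = 1 for 1 ≤ j ≤ i−1 and σ_j = −1 for i ≤ j ≤ b−1. -/
/-- The first interior spin `σ₁` of a block configuration `σ : {−1,1}^{b−1}`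
(interior sites `1, …, b−1` are indexed by `Fin (b−1)`, site `i` ↦ index `i−1`). -/
def firstSpin (b : ℕ) (σ : Fin (b - 1) → ℤ) : ℤ :=
  if h : 0 < b - 1 then σ ⟨0, h⟩ else 0

/-- The last interior spin `σ_{b−1}` of a block configuration. -/
def lastSpin (b : ℕ) (σ : Fin (b - 1) → ℤ) : ℤ :=
  if h : b - 2 < b - 1 then σ ⟨b - 2, h⟩ else 0

/-- The interior bond sum `Σ_{i=1}^{b−2} σᵢ σᵢ₊₁` of a block configuration. -/
def bondSum (b : ℕ) (σ : Fin (b - 1) → ℤ) : ℤ :=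
  ∑ i : Fin (b - 1), if h : (i : ℕ) + 1 < b - 1 then σ i * σ ⟨(i : ℕ) + 1, h⟩ else 0

lemma chain_aux (s : ℕ → ℤ) (hs : ∀ k, s k = 1 ∨ s k = -1) (m : ℕ) :
    s 0 + ∑ k ∈ Finset.range m, s k * s (k + 1) - s m ≤ m ∧
    (s 0 + ∑ k ∈ Finset.range m, s k * s (k + 1) - s m = m ↔
      ∃ i, i ≤ m + 1 ∧ ∀ k, k ≤ m → s k = if k < i then 1 else -1) := by
  induction m with
  | zero =>
    refine ⟨by simp, ?_⟩
    simp only [Finset.range_zero, Finset.sum_empty, add_zero, sub_self, Nat.cast_zero, true_iff]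
    rcases hs 0 with h | h
    · exact ⟨1, by omega, fun k hk => by obtain rfl : k = 0 := by omega
                                         simp [h]⟩
    · exact ⟨0, by omega, fun k hk => by obtain rfl : k = 0 := by omega
                                         simp [h]⟩
  | succ m ih =>
    rw [Finset.sum_range_succ]
    set S := ∑ k ∈ Finset.range m, s k * s (k + 1)
    obtain ⟨ih1, ih2⟩ := ih
    push_cast
    have hstep : (∃ i, i ≤ m + 1 + 1 ∧ ∀ k, k ≤ m + 1 → s k = if k < i then 1 else -1) →
        (∃ i, i ≤ m + 1 ∧ ∀ k, k ≤ m → s k = if k < i then 1 else -1) := by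
      rintro ⟨i, hi, h⟩
      by_cases hi' : i ≤ m + 1
      · exact ⟨i, hi', fun k hk => h k (by omega)⟩
      · refine ⟨m + 1, le_rfl, fun k hk => ?_⟩
        rw [h k (by omega), if_pos (by omega), if_pos (by omega)]
    rcases hs m with h0 | h0 <;> rcases hs (m + 1) with h1 | h1 <;> rw [h0] at ih1 ih2 <;>
      rw [h0, h1]
    · refine ⟨by linarith, fun h => ?_, fun h => by linarith [ih2.2 (hstep h)]⟩
      obtain ⟨i, hi, hk⟩ := ih2.1 (by linarith)
      refine ⟨m + 2, by omega, fun k hkm => ?_⟩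
      rcases Nat.lt_or_ge m k with hlt | hle
      · obtain rfl : k = m + 1 := by omega
        simp [h1]
      · have := hk m le_rfl
        have := hk k hle
        grind
    · refine ⟨by linarith, fun h => ?_, fun h => by linarith [ih2.2 (hstep h)]⟩
      obtain ⟨i, hi, hk⟩ := ih2.1 (by linarith)
      refine ⟨i, by omega, fun k hkm => ?_⟩
      rcases Nat.lt_or_ge m k with hlt | hle
      · obtain rfl : k = m + 1 := by omega
        rw [h1, if_neg (by omega)]
      · exact hk k hle
    · refine ⟨by linarith, fun h => by linarith, ?_⟩
      rintro ⟨i, hi, h⟩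
      have := h m (by omega)
      have := h (m + 1) le_rfl
      grind
    · refine ⟨by linarith, fun h => ?_, fun h => by linarith [ih2.2 (hstep h)]⟩
      obtain ⟨i, hi, hk⟩ := ih2.1 (by linarith)
      refine ⟨i, by omega, fun k hkm => ?_⟩
      rcases Nat.lt_or_ge m k with hlt | hle
      · obtain rfl : k = m + 1 := by omega
        rw [h1, if_neg (by omega)]
      · exact hk k hle

lemma block_aux (b : ℕ) (hb : 2 ≤ b) (σ : Fin (b - 1) → ℤ) (hσ : ∀ i, σ i = 1 ∨ σ i = -1) :
    firstSpin b σ + bondSum b σ - lastSpin b σ ≤ (b : ℤ) - 2 ∧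
    (firstSpin b σ + bondSum b σ - lastSpin b σ = (b : ℤ) - 2 ↔
      ∃ i : ℕ, i ∈ Finset.Icc 1 b ∧
          σ = fun j : Fin (b - 1) => if (j : ℕ) + 1 < i then 1 else -1) := by
  obtain ⟨n, rfl⟩ : ∃ n, b = n + 2 := ⟨b - 2, by omega⟩
  change Fin (n + 1) → ℤ at σ
  let s : ℕ → ℤ := fun k => if h : k < n + 1 then σ ⟨k, h⟩ else -1
  have hs : ∀ k, s k = 1 ∨ s k = -1 := by
    intro k
    by_cases h : k < n + 1
    · simp only [s, dif_pos h]
      exact hσ ⟨k, h⟩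
    · simp only [s, dif_neg h, or_true]
  have hsσ : ∀ j : Fin (n + 1), σ j = s j := fun j => by simp only [s, dif_pos j.2]
  have e1 : firstSpin (n + 2) σ = s 0 := by simp [firstSpin, s]
  have e2 : lastSpin (n + 2) σ = s n := by simp [lastSpin, s]
  have e3 : bondSum (n + 2) σ = ∑ k ∈ Finset.range n, s k * s (k + 1) := by
    have : bondSum (n + 2) σ =
        ∑ i : Fin (n + 1), (fun k : ℕ => if k + 1 < n + 1 then s k * s (k + 1) else 0) i := by
      unfold bondSum
      refine Finset.sum_congr rfl fun i _ => ?_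
      by_cases h : (i : ℕ) + 1 < n + 1
      · have h' : (i : ℕ) + 1 < n + 2 - 1 := h
        rw [dif_pos h', hsσ i]
        simp only [if_pos h]
        rw [hsσ]
      · have h' : ¬ (i : ℕ) + 1 < n + 2 - 1 := h
        rw [dif_neg h']
        simp only [if_neg h]
    rw [this, Fin.sum_univ_eq_sum_range
      (fun k : ℕ => if k + 1 < n + 1 then s k * s (k + 1) else 0) (n + 1), Finset.sum_range_succ, if_neg (by omega), add_zero]
    refine Finset.sum_congr rfl fun k hk => ?_
    rw [if_pos (by have := Finset.mem_range.1 hk; omega)]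
  obtain ⟨c1, c2⟩ := chain_aux s hs n
  rw [e1, e2, e3]
  have e4 : ((n + 2 : ℕ) : ℤ) - 2 = n := by push_cast; ring
  rw [e4]
  refine ⟨c1, c2.trans ⟨?_, ?_⟩⟩
  · rintro ⟨i, hi, h⟩
    refine ⟨i + 1, Finset.mem_Icc.2 (by omega), ?_⟩
    funext j
    have hj : (j : ℕ) < n + 1 := j.2
    rw [hsσ j, h j (by omega)]
    simp
  · rintro ⟨i, hi, h⟩
    have hi := Finset.mem_Icc.1 hi
    refine ⟨i - 1, by omega, fun k hk => ?_⟩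
    have := congrFun h ⟨k, by omega⟩
    rw [hsσ] at this
    rw [show s k = _ from this]
    have : k + 1 < i ↔ k < i - 1 := by omega
    simp [this]

lemma conf_inj (b : ℕ) : Set.InjOn
    (fun (i : ℕ) (j : Fin (b - 1)) => if (j : ℕ) + 1 < i then (1 : ℤ) else -1)
    (Finset.Icc 1 b : Finset ℕ) := by
  have key : ∀ i i' : ℕ, 1 ≤ i → i < i' → i' ≤ b →
      (fun j : Fin (b - 1) => if (j : ℕ) + 1 < i then (1 : ℤ) else -1) ≠
      (fun j : Fin (b - 1) => if (j : ℕ) + 1 < i' then (1 : ℤ) else -1) := by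
    intro i i' h1 h2 h3 h
    have := congrFun h ⟨i - 1, by omega⟩
    simp only at this
    rw [if_neg (by omega), if_pos (by omega)] at this
    norm_num at this
  intro i hi i' hi' h
  have hi := Finset.mem_Icc.1 (Finset.mem_coe.1 hi)
  have hi' := Finset.mem_Icc.1 (Finset.mem_coe.1 hi')
  rcases lt_trichotomy i i' with hl | hl | hl
  · exact absurd h (key i i' hi.1 hl hi'.2)
  · exact hl
  · exact absurd h.symm (key i' i hi'.1 hl hi.2)

/-- **Maximizers for `+/−` boundary spins.**  For `b ≥ 2` and
`g(σ) = σ₁ + Σ_{i=1}^{b−2} σᵢσᵢ₊₁ − σ_{b−1}` on `{−1,1}^{b−1}`, the maximum of `g`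
equals `b − 2`, and the set of maximizers has exactly `b` elements: for each
`i ∈ {1, …, b}` there is exactly one maximizer, namely the configuration with
`σⱼ = 1` for `1 ≤ j ≤ i−1` and `σⱼ = −1` for `i ≤ j ≤ b−1` (here site `j`
corresponds to the index `j−1` of `Fin (b−1)`). -/
theorem plus_minus_maximizers (b : ℕ) (hb : 2 ≤ b) :
    (∀ σ : Fin (b - 1) → ℤ, (∀ i, σ i = 1 ∨ σ i = -1) →
      firstSpin b σ + bondSum b σ - lastSpin b σ ≤ (b : ℤ) - 2) ∧
    (∀ σ : Fin (b - 1) → ℤ, (∀ i, σ i = 1 ∨ σ i = -1) →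
      (firstSpin b σ + bondSum b σ - lastSpin b σ = (b : ℤ) - 2 ↔
        ∃! i : ℕ, i ∈ Finset.Icc 1 b ∧
          σ = fun j : Fin (b - 1) => if (j : ℕ) + 1 < i then 1 else -1)) ∧
    {σ : Fin (b - 1) → ℤ | (∀ i, σ i = 1 ∨ σ i = -1) ∧
        firstSpin b σ + bondSum b σ - lastSpin b σ = (b : ℤ) - 2}.ncard = b := by
  refine ⟨fun σ hσ => (block_aux b hb σ hσ).1, fun σ hσ => ?_, ?_⟩
  · rw [(block_aux b hb σ hσ).2]
    constructor
    · rintro ⟨i, hi, h⟩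
      refine ⟨i, ⟨hi, h⟩, ?_⟩
      rintro i' ⟨hi', h'⟩
      exact conf_inj b (Finset.mem_coe.2 hi') (Finset.mem_coe.2 hi) (h'.symm.trans h)
    · rintro ⟨i, hi, -⟩
      exact ⟨i, hi⟩
  · have : {σ : Fin (b - 1) → ℤ | (∀ i, σ i = 1 ∨ σ i = -1) ∧
        firstSpin b σ + bondSum b σ - lastSpin b σ = (b : ℤ) - 2} =
        Set.image (fun (i : ℕ) (j : Fin (b - 1)) => if (j : ℕ) + 1 < i then (1 : ℤ) else -1)
          (Finset.Icc 1 b : Finset ℕ) := by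
      ext σ
      constructor
      · rintro ⟨hσ, h⟩
        obtain ⟨i, hi, h⟩ := (block_aux b hb σ hσ).2.1 h
        exact ⟨i, Finset.mem_coe.2 hi, h.symm⟩
      · rintro ⟨i, hi, h⟩
        have hσ : ∀ i, σ i = 1 ∨ σ i = -1 := by
          intro j
          rw [← h]
          by_cases hj : (j : ℕ) + 1 < i <;> simp [hj]
        exact ⟨hσ, (block_aux b hb σ hσ).2.2 ⟨i, Finset.mem_coe.1 hi, h.symm⟩⟩
    rw [this, Set.InjOn.ncard_image (conf_inj b), Set.ncard_coe_finset]
    simp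
end

section
/- Let b ≥ 2 be an integer and define g : {−1,1}^{b−1} → ℤ by g(σ) = σ₁ + Σ_{i=1}^{b−2} σᵢσᵢ₊₁ − σ_{b−1}. Then the sum of the total magnetization Σ_{i=1}^{b−1} σᵢ over all maximizers of g equals 0. -/
/-- Reflection combined with a global spin flip. -/
def flipRev (n : ℕ) (σ : Fin n → ℤ) : Fin n → ℤ := fun i => -σ i.rev

lemma flipRev_flipRev (n : ℕ) (σ : Fin n → ℤ) : flipRev n (flipRev n σ) = σ := by
  funext i; simp [flipRev]

lemma bondSum_eq (n : ℕ) (σ : Fin (n + 1) → ℤ) :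
    bondSum (n + 2) σ = ∑ i : Fin n, σ i.castSucc * σ i.succ := by
  have h : bondSum (n + 2) σ = ∑ i : Fin (n + 1),
      if h : (i : ℕ) + 1 < n + 1 then σ i * σ ⟨(i : ℕ) + 1, h⟩ else 0 := rfl
  rw [h, Fin.sum_univ_castSucc]
  simp [Fin.succ]

lemma bondSum_flipRev (n : ℕ) (σ : Fin (n + 1) → ℤ) :
    bondSum (n + 2) (flipRev (n + 1) σ) = bondSum (n + 2) σ := by
  rw [bondSum_eq, bondSum_eq, ← Equiv.sum_comp Fin.revPerm]
  refine Finset.sum_congr rfl fun i _ => ?_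
  simp [flipRev, Fin.rev_castSucc, Fin.rev_succ, mul_comm]

lemma firstSpin_eq (n : ℕ) (σ : Fin (n + 1) → ℤ) : firstSpin (n + 2) σ = σ 0 := by
  simp [firstSpin]

lemma lastSpin_eq (n : ℕ) (σ : Fin (n + 1) → ℤ) : lastSpin (n + 2) σ = σ (Fin.last n) := by
  simp [lastSpin, Fin.last]

lemma energy_flipRev (n : ℕ) (σ : Fin (n + 1) → ℤ) :
    firstSpin (n + 2) (flipRev (n + 1) σ) + bondSum (n + 2) (flipRev (n + 1) σ)
      - lastSpin (n + 2) (flipRev (n + 1) σ) =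
    firstSpin (n + 2) σ + bondSum (n + 2) σ - lastSpin (n + 2) σ := by
  rw [bondSum_flipRev, firstSpin_eq, firstSpin_eq, lastSpin_eq, lastSpin_eq]
  simp [flipRev]
  ring

lemma sum_flipRev (n : ℕ) (σ : Fin n → ℤ) : ∑ i, flipRev n σ i = -∑ i, σ i := by
  rw [← Equiv.sum_comp Fin.revPerm]
  simp [flipRev]

lemma spin_flipRev (n : ℕ) (σ : Fin n → ℤ) (h : ∀ i, σ i = 1 ∨ σ i = -1) (i : Fin n) :
    flipRev n σ i = 1 ∨ flipRev n σ i = -1 := by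
  rcases h i.rev with h | h <;> simp [flipRev, h]

/-- **Zero total magnetization over the `+/−` maximizers.**  For `b ≥ 2` and
`g(σ) = σ₁ + Σ_{i=1}^{b−2} σᵢσᵢ₊₁ − σ_{b−1}` on `{−1,1}^{b−1}`, the sum of the
total magnetization `Σ_{i=1}^{b−1} σᵢ` over all maximizers of `g` equals `0`. -/
theorem plus_minus_maximizers_magnetization (b : ℕ) (hb : 2 ≤ b) :
    (∑ᶠ σ ∈ {σ : Fin (b - 1) → ℤ | (∀ i, σ i = 1 ∨ σ i = -1) ∧
        ∀ τ : Fin (b - 1) → ℤ, (∀ i, τ i = 1 ∨ τ i = -1) →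
          firstSpin b τ + bondSum b τ - lastSpin b τ ≤
            firstSpin b σ + bondSum b σ - lastSpin b σ},
      ∑ i : Fin (b - 1), σ i) = 0 := by
  obtain ⟨n, rfl⟩ : ∃ n, b = n + 2 := ⟨b - 2, by omega⟩
  set S := {σ : Fin (n + 2 - 1) → ℤ | (∀ i, σ i = 1 ∨ σ i = -1) ∧
        ∀ τ : Fin (n + 2 - 1) → ℤ, (∀ i, τ i = 1 ∨ τ i = -1) →
          firstSpin (n + 2) τ + bondSum (n + 2) τ - lastSpin (n + 2) τ ≤
            firstSpin (n + 2) σ + bondSum (n + 2) σ - lastSpin (n + 2) σ} with hS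
  have hmaps : Set.MapsTo (flipRev (n + 1)) S S := by
    rintro σ ⟨h1, h2⟩
    refine ⟨spin_flipRev _ σ h1, fun τ hτ => ?_⟩
    exact (h2 τ hτ).trans (energy_flipRev n σ).ge
  have hbij : Set.BijOn (flipRev (n + 1)) S S :=
    Set.InvOn.bijOn ⟨fun σ _ => flipRev_flipRev _ σ, fun σ _ => flipRev_flipRev _ σ⟩ hmaps hmaps
  have key : (∑ᶠ σ ∈ S, -∑ i, σ i) = ∑ᶠ σ ∈ S, ∑ i, σ i :=
    finsum_mem_eq_of_bijOn _ hbij fun σ _ => (sum_flipRev _ σ).symm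
  have hneg : (∑ᶠ σ ∈ S, -∑ i, σ i) = -∑ᶠ σ ∈ S, ∑ i, σ i := by
    rw [← finsum_neg_distrib]
    refine finsum_congr fun σ => ?_
    rw [← finsum_neg_distrib]
  rw [hneg] at key
  omega
end
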